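/- Let M be an oriented compact connected n-manifold with non-empty boundary whose boundary components S₁,…,S_l are all π₁-injective in M, and let f : ∂M → ∂M be an orientation-preserving homeomorphism. Then cat_Am(D_f(M)) ≤ cat_Am(M) + max_{i∈{1,…,l}} ( cat_Am(S_i) + 1 ). -/

import Mathlib

open scoped Topology
open CategoryTheory

noncomputable section

/-- The closed unit disk `Dⁿ ⊆ ℝⁿ`. -/
def UnitDisk (n : ℕ) : Set (EuclideanSpace ℝ (Fin n)) := Metric.closedBall 0 1

/-- The unit sphere `Sⁿ⁻¹ ⊆ ℝⁿ` (the boundary of `Dⁿ`). -/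
def UnitSphere (n : ℕ) : Set (EuclideanSpace ℝ (Fin n)) := Metric.sphere 0 1

/-- A CW-structure on a topological space (the non-equivariant case of a `G`-CW-structure). -/
structure CWStructure (X : Type) [TopologicalSpace X] : Type 1 where
  t2 : T2Space X
  cells : ℕ → Type
  charMap : ∀ n, cells n → UnitDisk n → X
  charMap_continuous : ∀ n i, Continuous (charMap n i)
  sphere_le : ∀ n i (z : UnitDisk n), ‖(z : EuclideanSpace ℝ (Fin n))‖ = 1 →
    ∃ (m : ℕ) (_ : m < n) (j : cells m) (w : UnitDisk m),
      ‖(w : EuclideanSpace ℝ (Fin m))‖ < 1 ∧ charMap m j w = charMap n i z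
  partition : ∀ x : X, ∃! p : Σ (n : ℕ) (_ : cells n), UnitDisk n,
      ‖(p.2.2 : EuclideanSpace ℝ (Fin p.1))‖ < 1 ∧ charMap p.1 p.2.1 p.2.2 = x
  weak_topology : ∀ A : Set X, IsClosed A ↔ ∀ n i, IsClosed (charMap n i ⁻¹' A)

/-- The CW-complex has dimension at most `c`. -/
def CWStructure.DimLE {X : Type} [TopologicalSpace X] (C : CWStructure X) (c : ℕ∞) : Prop :=
  ∀ n : ℕ, c < (n : ℕ∞) → IsEmpty (C.cells n)

/-- A CW-model of the classifying space `BG`: an aspherical path-connected CW-complex with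
fundamental group isomorphic to `G`. -/
structure ClassifyingModel (G : Type) [Group G] : Type 1 where
  space : Type
  [topology : TopologicalSpace space]
  cw : CWStructure space
  pathConnected : PathConnectedSpace space
  basepoint : space
  /-- all higher homotopy groups vanish -/
  aspherical : ∀ n : ℕ, 2 ≤ n → Subsingleton (HomotopyGroup.Pi n space basepoint)
  iso : FundamentalGroup space basepoint ≃* G

attribute [instance] ClassifyingModel.topology

/-- The geometric dimension of `G`: the infimum of the dimensions of CW-models of `BG`. -/
def gd (G : Type) [Group G] : ℕ∞ :=
  sInf {c : ℕ∞ | ∃ Y : ClassifyingModel G, Y.cw.DimLE c}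

attribute [local instance] Path.Homotopic.setoid

/-- The element of the fundamental group determined by a homotopy class of loops. -/
def pathToPi1 {Y : Type} [TopologicalSpace Y] {y : Y} (p : Path.Homotopic.Quotient y y) :
    FundamentalGroup Y y :=
  FundamentalGroup.fromPath (X := TopCat.of Y) p

/-- A left-invariant finitely additive probability measure defined on all subsets of `G`. -/
structure InvariantMean (G : Type) [Group G] where
  meas : Set G → ℝ
  nonneg : ∀ A : Set G, 0 ≤ meas A
  total : meas Set.univ = 1
  additive : ∀ A B : Set G, Disjoint A B → meas (A ∪ B) = meas A + meas B
  invariant : ∀ (g : G) (A : Set G), meas ((g * ·) '' A) = meas A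

/-- A group is amenable if it admits a left-invariant mean. -/
def IsAmenable (G : Type) [Group G] : Prop := Nonempty (InvariantMean G)

/-- The condition on a member `U` of an amenable open cover: for every `y ∈ U`, the image of
`π₁(U, y) → π₁(Y, y)` is contained in an amenable subgroup. -/
def AmenableCoverCondition {Y : Type} [TopologicalSpace Y] (U : Set Y) : Prop :=
  ∀ y ∈ U, ∃ H : Subgroup (FundamentalGroup Y y), IsAmenable H ∧
    ∀ p : Path y y, (∀ t, p t ∈ U) → pathToPi1 ⟦p⟧ ∈ H

/-- The amenable category `cat_Am(Y)` of a space `Y`: the infimum of all `n` such that `Y`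
admits a cover by `n + 1` amenable open subsets. -/
def amCat (Y : Type) [TopologicalSpace Y] : ℕ∞ :=
  sInf {c : ℕ∞ | ∃ n : ℕ, c = (n : ℕ∞) ∧ ∃ U : Fin (n + 1) → Set Y,
    (∀ i, IsOpen (U i)) ∧ (∀ y : Y, ∃ i, y ∈ U i) ∧ ∀ i, AmenableCoverCondition (U i)}

/-- The amenable category of a group: `cat_Am(G) := cat_Am(BG)`. -/
def amCatGroup (G : Type) [Group G] : ℕ∞ :=
  sInf {c : ℕ∞ | ∃ Y : ClassifyingModel G, c = amCat Y.space}

/-- A subspace `S ⊆ X` is `π₁`-injective if for every basepoint in `S` the inclusion induces an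
injective map on fundamental groups, i.e. loops in `S` that are homotopic in `X` are already
homotopic in `S`. -/
def Pi1Injective {X : Type} [TopologicalSpace X] (S : Set X) : Prop :=
  ∀ (x : S) (p q : Path x x),
    (p.map continuous_subtype_val).Homotopic (q.map continuous_subtype_val) → p.Homotopic q

/-- The image of `π₁(S, x) → π₁(X, x)` (as a subset of the fundamental group of `X`). -/
def loopImageSet {X : Type} [TopologicalSpace X] (S : Set X) (x : X) :
    Set (FundamentalGroup X x) :=
  {g | ∃ p : Path x x, (∀ t, p t ∈ S) ∧ g = pathToPi1 ⟦p⟧}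

/-- The standard topological `n`-simplex. -/
def TopSimplex (n : ℕ) : Set (Fin (n + 1) → ℝ) := stdSimplex ℝ (Fin (n + 1))

/-- Singular `n`-chains on `X` with coefficients in `R`: finitely supported functions on the
set of singular `n`-simplices. -/
abbrev SingularChain (R : Type) [CommRing R] (X : Type) [TopologicalSpace X] (n : ℕ) :=
  C(TopSimplex n, X) →₀ R

/-- The `i`-th face inclusion of standard simplices. -/
def faceMap (n : ℕ) (i : Fin (n + 2)) : C(TopSimplex n, TopSimplex (n + 1)) where
  toFun x := ⟨fun j => ∑ k : Fin (n + 1), if i.succAbove k = j then (x : Fin (n + 1) → ℝ) k else 0,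
    by
      refine ⟨fun j => Finset.sum_nonneg fun k _ => ?_, ?_⟩
      · by_cases h : i.succAbove k = j
        · simpa [h] using x.2.1 k
        · simp [h]
      · rw [Finset.sum_comm]
        simp only [Finset.sum_ite_eq, Finset.mem_univ, if_true]
        exact x.2.2⟩
  continuous_toFun := by
    apply Continuous.subtype_mk
    apply continuous_pi
    intro j
    apply continuous_finset_sum
    intro k _
    by_cases h : i.succAbove k = j
    · simp only [if_pos h]
      exact (continuous_apply k).comp continuous_subtype_val
    · simpa [h] using continuous_const

variable {R : Type} [CommRing R] {X Y : Type} [TopologicalSpace X] [TopologicalSpace Y]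

/-- The boundary operator on singular chains. -/
def chainBoundary {n : ℕ} (c : SingularChain R X (n + 1)) : SingularChain R X n :=
  c.sum fun σ r =>
    ∑ i : Fin (n + 2), (r * (-1) ^ (i : ℕ)) • Finsupp.single (σ.comp (faceMap n i)) (1 : R)

/-- The boundary operator, lowering the degree by one (with `∂ = 0` in degree `0`). -/
def chainBoundaryFrom : ∀ n, SingularChain R X n → SingularChain R X (n - 1)
  | 0, _ => 0
  | _ + 1, c => chainBoundary c

/-- The pushforward of singular chains along a continuous map. -/
def chainMap (f : C(X, Y)) {n : ℕ} (c : SingularChain R X n) : SingularChain R Y n :=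
  c.sum fun σ r => Finsupp.single (f.comp σ) r

/-- The inclusion of a subspace as a continuous map. -/
def subInc {X : Type} [TopologicalSpace X] (A : Set X) : C(A, X) :=
  ⟨Subtype.val, continuous_subtype_val⟩

/-- The chains on `X` supported on the subspace `A`. -/
def chainsOn (A : Set X) (n : ℕ) : Set (SingularChain R X n) :=
  Set.range fun c : SingularChain R A n => chainMap (subInc A) c

/-- A relative `n`-cycle of `(X, A)`. -/
def IsRelCycle (A : Set X) : ∀ n, SingularChain R X n → Prop
  | 0, _ => True
  | n + 1, c => chainBoundary c ∈ chainsOn A n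

/-- Two relative `n`-cycles define the same class in `H_n(X, A; R)`. -/
def RelHomologous (A : Set X) (n : ℕ) (c d : SingularChain R X n) : Prop :=
  ∃ b : SingularChain R X (n + 1), ∃ a ∈ chainsOn (R := R) A n, c - d = chainBoundary b + a

/-- The `ℓ¹`-norm `|c|₁ = ∑_σ |a_σ|` of a real singular chain `c = ∑_σ a_σ · σ`. -/
def chainNorm {n : ℕ} (c : SingularChain ℝ X n) : ℝ :=
  c.sum fun _ r => |r|

/-- Extension of coefficients `ℤ → ℝ` on singular chains. -/
def chainExt {n : ℕ} (c : SingularChain ℤ X n) : SingularChain ℝ X n :=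
  Finsupp.mapRange (fun k : ℤ => (k : ℝ)) (by norm_num) c

/-- The halfspace `{x : ℝⁿ | x₀ ≥ 0}` (all of `ℝ⁰` for `n = 0`). -/
def HalfSpace (n : ℕ) : Set (Fin n → ℝ) := {x | ∀ h : 0 < n, 0 ≤ x ⟨0, h⟩}

/-- The boundary `{x₀ = 0}` of the halfspace. -/
def HalfSpaceBoundary (n : ℕ) : Set (Fin n → ℝ) := {x | ∃ h : 0 < n, x ⟨0, h⟩ = 0}

/-- An oriented compact connected topological `n`-manifold with (possibly empty) boundary.
The orientation is recorded by an integral relative fundamental cycle `fundClass`, i.e. a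
relative cycle whose class generates `H_n(M, ∂M; ℤ) ≅ ℤ` (for a compact connected `n`-manifold,
such a generator exists if and only if the manifold is orientable, and the choice of generator
is exactly the choice of orientation). -/
structure OCCManifold (n : ℕ) : Type 1 where
  carrier : Type
  [topology : TopologicalSpace carrier]
  boundary : Set carrier
  t2 : T2Space carrier
  compact : CompactSpace carrier
  connected : ConnectedSpace carrier
  /-- every point has a halfspace chart, which detects the boundary -/
  charts : ∀ x : carrier, ∃ (U : Set carrier) (V : Set (HalfSpace n)) (φ : U ≃ₜ V),
    x ∈ U ∧ IsOpen U ∧ IsOpen V ∧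
    ∀ y : U, ((y : carrier) ∈ boundary ↔
      ((φ y : HalfSpace n) : Fin n → ℝ) ∈ HalfSpaceBoundary n)
  fundClass : SingularChain ℤ carrier n
  fundClass_cycle : IsRelCycle boundary n fundClass
  fundClass_gen : ∀ c : SingularChain ℤ carrier n, IsRelCycle boundary n c →
    ∃ k : ℤ, RelHomologous boundary n c (k • fundClass)
  fundClass_ord : ∀ k : ℤ, RelHomologous boundary n (k • fundClass) 0 → k = 0

attribute [instance] OCCManifold.topology

/-- A real relative fundamental cycle of `(M, ∂M)`: a real relative cycle representing the image
of the integral fundamental class under the change of coefficients `ℤ → ℝ`. -/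
def IsFundamentalCycle {n : ℕ} (M : OCCManifold n) (c : SingularChain ℝ M.carrier n) : Prop :=
  IsRelCycle M.boundary n c ∧ RelHomologous M.boundary n c (chainExt M.fundClass)

/-- The (relative) simplicial volume `‖M, ∂M‖`: the infimum of the `ℓ¹`-norms of the real
relative fundamental cycles of `(M, ∂M)`.  For closed `M` this is the simplicial volume `‖M‖`. -/
def simVol {n : ℕ} (M : OCCManifold n) : ℝ :=
  sInf {r : ℝ | ∃ c : SingularChain ℝ M.carrier n, IsFundamentalCycle M c ∧ r = chainNorm c}

/-- `S` is a boundary component of `M`, i.e. a connected component of `∂M`. -/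
def IsBoundaryComponent {n : ℕ} (M : OCCManifold n) (S : Set M.carrier) : Prop :=
  ∃ x ∈ M.boundary, S = connectedComponentIn M.boundary x

open scoped Classical in
/-- `z` is a fundamental cycle for the induced orientation on the part `S` of the boundary of
`M`: a cycle on `S` which, pushed into `M`, is the part of `∂(fundClass)` supported on `S`. -/
def IsInducedBoundaryCycle {n : ℕ} (M : OCCManifold n) (S : Set M.carrier)
    (z : SingularChain ℤ S (n - 1)) : Prop :=
  IsRelCycle (∅ : Set S) (n - 1) z ∧
    chainMap (subInc S) z =
      (chainBoundaryFrom n M.fundClass).filter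
        (fun σ : C(TopSimplex (n - 1), M.carrier) => ∀ t, σ t ∈ S)

/-- `h` carries the induced orientation of `S ⊆ ∂M` to `sign` times the induced orientation of
`T ⊆ ∂N`: with `sign = 1` this says that `h` is orientation-preserving, and with `sign = -1`
that `h` is orientation-reversing. -/
def OrientationCompatible {n : ℕ} (sign : ℤ) (M N : OCCManifold n)
    {S : Set M.carrier} {T : Set N.carrier} (h : S ≃ₜ T) : Prop :=
  ∀ z w, IsInducedBoundaryCycle M S z → IsInducedBoundaryCycle N T w →
    RelHomologous (∅ : Set T) (n - 1)
      (chainMap ⟨h, h.continuous_toFun⟩ z) (sign • w)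

/-- The twisted double `D_f(M) = M ∪_f (−M)`, presented as a closed manifold together with the
two copies of `M` and the quotient description of the gluing along `f`. -/
structure TwistedDouble {n : ℕ} (M : OCCManifold n) (f : M.boundary ≃ₜ M.boundary) : Type 1 where
  double : OCCManifold n
  closed : double.boundary = ∅
  /-- the copy of `M` -/
  embp : C(M.carrier, double.carrier)
  /-- the copy of `−M` -/
  embm : C(M.carrier, double.carrier)
  quotient : Topology.IsQuotientMap (Sum.elim embp embm : M.carrier ⊕ M.carrier → double.carrier)
  identifications : ∀ a b : M.carrier ⊕ M.carrier,
    Sum.elim embp embm a = Sum.elim embp embm b ↔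
      Relation.EqvGen (fun p q : M.carrier ⊕ M.carrier =>
        ∃ z : M.boundary, p = Sum.inl (z : M.carrier) ∧
          q = Sum.inr ((f z : M.boundary) : M.carrier)) a b

open Topology

/-!
The interiors of the two copies of `M` are disjoint open subsets of the double, so `cat_Am(M) + 1`
amenable open sets suffice to cover both. It remains to cover the glued boundary. The components of
`∂M` are disjoint and open in `∂M`, so `max (cat_Am(S_i) + 1)` amenable open subsets of `∂M` cover
it, and these can be shrunk to a compact cover of `∂M`. A compact subset of such a set has a
neighbourhood in the double whose loops are homotopic, after conjugation by a path, to loops in the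
set: the double is locally simply connected, so a loop close to the compact set may be subdivided
and pushed into the set piece by piece. Hence the neighbourhood is again amenable.
-/

section AmenableGroups

variable {G H : Type} [Group G] [Group H]

/-- The pushforward of an invariant mean along a surjective homomorphism. -/
def InvariantMean.map (m : InvariantMean G) (φ : G →* H) (hφ : Function.Surjective φ) :
    InvariantMean H where
  meas A := m.meas (φ ⁻¹' A)
  nonneg _ := m.nonneg _
  total := m.total
  additive A B hAB := by rw [Set.preimage_union, m.additive _ _ (hAB.preimage φ)]
  invariant h A := by
    obtain ⟨g, rfl⟩ := hφ h
    have hpre : φ ⁻¹' ((φ g * ·) '' A) = (g * ·) '' (φ ⁻¹' A) := by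
      ext x
      simp only [Set.image_mul_left, Set.mem_preimage, map_mul, map_inv]
    rw [hpre, m.invariant]

lemma IsAmenable.of_surjective (hG : IsAmenable G) (φ : G →* H) (hφ : Function.Surjective φ) :
    IsAmenable H :=
  hG.elim fun m => ⟨m.map φ hφ⟩

lemma IsAmenable.map_subgroup {K : Subgroup G} (hK : IsAmenable K) (φ : G →* H) :
    IsAmenable (K.map φ) :=
  hK.of_surjective (φ.subgroupMap K) (φ.subgroupMap_surjective K)

end AmenableGroups

section LoopsFactorThrough

variable {B A E : Type} [TopologicalSpace B] [TopologicalSpace A] [TopologicalSpace E]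

/-- The homomorphism `π₁(A, a) → π₁(E, y)` induced by `φ : A → E` and a path `γ` from `y` to
`φ a`. -/
def pi1Map (φ : C(A, E)) {a : A} {y : E} (γ : Path y (φ a)) :
    FundamentalGroup A a →* FundamentalGroup E y :=
  (FundamentalGroup.fundamentalGroupMulEquivOfPath γ.symm).toMonoidHom.comp
    (FundamentalGroup.map φ a)

lemma pi1Map_pathToPi1 (φ : C(A, E)) {a : A} {y : E} (γ : Path y (φ a)) (q : Path a a) :
    pi1Map φ γ (pathToPi1 ⟦q⟧) =
      pathToPi1 ⟦γ.trans ((q.map φ.continuous).trans γ.symm)⟧ := by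
  change (Path.Homotopic.Quotient.mk γ.symm).symm.trans
    ((Path.Homotopic.Quotient.mk (q.map φ.continuous)).trans
      (Path.Homotopic.Quotient.mk γ.symm)) = _
  rw [← Path.Homotopic.Quotient.mk_symm, Path.symm_symm]
  rfl

/-- Loops in `U ⊆ E` factor up to homotopy through `φ` restricted to `V ⊆ A`: for every base
point `y ∈ U`, the image of `π₁(U, y)` in `π₁(E, y)` is contained in the image of some
`π₁(V, a)`, where the base points `y` and `φ a` are connected by a path in `E`. -/
def LoopsFactorThrough (φ : C(A, E)) (V : Set A) (U : Set E) : Prop :=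
  ∀ y ∈ U, ∃ a ∈ V, ∃ γ : Path y (φ a), ∀ p : Path y y, (∀ t, p t ∈ U) →
    ∃ q : Path a a, (∀ t, q t ∈ V) ∧ p.Homotopic (γ.trans ((q.map φ.continuous).trans γ.symm))

lemma LoopsFactorThrough.of_comp {φ : C(A, E)} {ψ : C(B, A)} {T : Set B} {V : Set A} {U : Set E}
    (h : LoopsFactorThrough (φ.comp ψ) T U) (hψ : Set.MapsTo ψ T V) :
    LoopsFactorThrough φ V U := by
  intro y hy
  obtain ⟨b, hb, γ, hγ⟩ := h y hy
  refine ⟨ψ b, hψ hb, γ, fun p hp => ?_⟩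
  obtain ⟨q, hq, hpq⟩ := hγ p hp
  exact ⟨q.map ψ.continuous, fun t => hψ (hq t), hpq⟩

lemma exists_path_map_eq {φ : C(A, E)} (hφ : IsEmbedding φ) {V : Set A} {a b : A}
    (p : Path (φ a) (φ b)) (hp : ∀ t, p t ∈ φ '' V) :
    ∃ q : Path a b, (∀ t, q t ∈ V) ∧ q.map φ.continuous = p := by
  choose q hqV hqp using hp
  have hq : Continuous q := by
    rw [hφ.continuous_iff, show φ ∘ q = p from funext hqp]
    exact p.continuous
  have hq₀ : q 0 = a := hφ.injective (by rw [hqp, p.source])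
  have hq₁ : q 1 = b := hφ.injective (by rw [hqp, p.target])
  exact ⟨⟨⟨q, hq⟩, hq₀, hq₁⟩, hqV, Path.ext (funext hqp)⟩

lemma loopsFactorThrough_image {φ : C(A, E)} (hφ : IsEmbedding φ) (V : Set A) :
    LoopsFactorThrough φ V (φ '' V) := by
  rintro _ ⟨a, ha, rfl⟩
  refine ⟨a, ha, Path.refl _, fun p hp => ?_⟩
  obtain ⟨q, hqV, rfl⟩ := exists_path_map_eq hφ p hp
  refine ⟨q, hqV, ?_⟩
  rw [← Path.Homotopic.Quotient.eq]
  simp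

end LoopsFactorThrough

namespace AmenableCoverCondition

variable {A E : Type} [TopologicalSpace A] [TopologicalSpace E]

lemma empty : AmenableCoverCondition (∅ : Set E) := fun _ hy => hy.elim

lemma mono {U V : Set E} (hV : AmenableCoverCondition V) (hUV : U ⊆ V) :
    AmenableCoverCondition U := fun y hy =>
  (hV y (hUV hy)).imp fun _ hH => ⟨hH.1, fun p hp => hH.2 p fun t => hUV (hp t)⟩

lemma of_loopsFactorThrough {φ : C(A, E)} {V : Set A} {U : Set E}
    (hV : AmenableCoverCondition V) (h : LoopsFactorThrough φ V U) :
    AmenableCoverCondition U := by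
  intro y hy
  obtain ⟨a, ha, γ, hγ⟩ := h y hy
  obtain ⟨H, hH, hloops⟩ := hV a ha
  refine ⟨H.map (pi1Map φ γ), hH.map_subgroup _, fun p hp => ?_⟩
  obtain ⟨q, hqV, hpq⟩ := hγ p hp
  rw [Quotient.sound hpq, ← pi1Map_pathToPi1]
  exact Subgroup.mem_map_of_mem _ (hloops q hqV)

lemma image {V : Set A} (hV : AmenableCoverCondition V) {φ : C(A, E)} (hφ : IsEmbedding φ) :
    AmenableCoverCondition (φ '' V) :=
  hV.of_loopsFactorThrough (loopsFactorThrough_image hφ V)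

lemma iUnion {ι : Type*} {U : ι → Set E} (hU : ∀ i, AmenableCoverCondition (U i))
    (hopen : ∀ i, IsOpen (U i)) (hdisj : Pairwise (Function.onFun Disjoint U)) :
    AmenableCoverCondition (⋃ i, U i) := by
  intro y hy
  obtain ⟨i, hi⟩ := Set.mem_iUnion.1 hy
  obtain ⟨H, hH, hloops⟩ := hU i y hi
  refine ⟨H, hH, fun p hp => hloops p fun t => ?_⟩
  have hrange : Set.range p ⊆ U i ∪ ⋃ (j) (_ : j ≠ i), U j := by
    rintro _ ⟨s, rfl⟩
    obtain ⟨j, hj⟩ := Set.mem_iUnion.1 (hp s)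
    by_cases hji : j = i
    · exact Or.inl (hji ▸ hj)
    · exact Or.inr (Set.mem_iUnion₂.2 ⟨j, hji, hj⟩)
  have hdisj' : Disjoint (U i) (⋃ (j) (_ : j ≠ i), U j) := by
    simp only [Set.disjoint_iUnion_right]
    exact fun j hji => hdisj hji.symm
  exact (isPreconnected_range p.continuous).subset_left_of_subset_union (hopen i)
    (isOpen_iUnion fun j => isOpen_iUnion fun _ => hopen j) hdisj' hrange
    ⟨y, ⟨0, p.source⟩, hi⟩ ⟨t, rfl⟩

end AmenableCoverCondition

section CoverNumber

variable {E : Type} [TopologicalSpace E]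

/-- `S` is covered by `m` open subsets of the ambient space satisfying the amenable cover
condition. -/
def HasAmenableCover (S : Set E) (m : ℕ) : Prop :=
  ∃ U : Fin m → Set E, (∀ i, IsOpen (U i)) ∧ S ⊆ ⋃ i, U i ∧ ∀ i, AmenableCoverCondition (U i)

/-- The least number of open subsets of the ambient space satisfying the amenable cover condition
that are needed to cover `S`. For the whole of a nonempty space this is `amCat + 1`; dropping the
normalisation makes the number subadditive under unions. -/
def amenableCoverNumber (S : Set E) : ℕ∞ := ⨅ (m : ℕ) (_ : HasAmenableCover S m), (m : ℕ∞)

lemma HasAmenableCover.of_fintype {ι : Type*} [Fintype ι] {S : Set E} {U : ι → Set E}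
    (hopen : ∀ i, IsOpen (U i)) (hS : S ⊆ ⋃ i, U i) (hU : ∀ i, AmenableCoverCondition (U i)) :
    HasAmenableCover S (Fintype.card ι) := by
  let e := (Fintype.equivFin ι).symm
  refine ⟨U ∘ e, fun i => hopen _, ?_, fun i => hU _⟩
  exact hS.trans (e.surjective.iUnion_comp U).ge

lemma HasAmenableCover.mono {S T : Set E} {m : ℕ} (hT : HasAmenableCover T m) (hST : S ⊆ T) :
    HasAmenableCover S m :=
  hT.imp fun _ hU => ⟨hU.1, hST.trans hU.2.1, hU.2.2⟩

lemma HasAmenableCover.union {S T : Set E} {m k : ℕ} (hS : HasAmenableCover S m)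
    (hT : HasAmenableCover T k) : HasAmenableCover (S ∪ T) (m + k) := by
  obtain ⟨U, hUo, hSU, hU⟩ := hS
  obtain ⟨V, hVo, hTV, hV⟩ := hT
  have h := HasAmenableCover.of_fintype (S := S ∪ T) (U := Sum.elim U V)
    (Sum.rec hUo hVo) (by rw [Set.iUnion_sumElim]; exact Set.union_subset_union hSU hTV)
    (Sum.rec hU hV)
  simpa using h

lemma hasAmenableCover_empty (m : ℕ) : HasAmenableCover (∅ : Set E) m :=
  ⟨fun _ => ∅, fun _ => isOpen_empty, Set.empty_subset _, fun _ => AmenableCoverCondition.empty⟩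

lemma HasAmenableCover.mono_right {S : Set E} {m k : ℕ} (hS : HasAmenableCover S m)
    (hmk : m ≤ k) : HasAmenableCover S k := by
  simpa [Nat.add_sub_cancel' hmk] using hS.union (hasAmenableCover_empty (k - m))

lemma amenableCoverNumber_le_iff {S : Set E} {m : ℕ} :
    amenableCoverNumber S ≤ m ↔ HasAmenableCover S m := by
  refine ⟨fun h => ?_, fun h => iInf₂_le m h⟩
  have hlt : amenableCoverNumber S < (m + 1 : ℕ) :=
    h.trans_lt (Nat.cast_lt.2 m.lt_succ_self)
  simp only [amenableCoverNumber, iInf_lt_iff, Nat.cast_lt] at hlt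
  obtain ⟨k, hk, hkm⟩ := hlt
  exact hk.mono_right (Nat.lt_succ_iff.1 hkm)

lemma amenableCoverNumber_le_of_forall {S : Set E} {c : ℕ∞}
    (h : ∀ m : ℕ, c ≤ m → HasAmenableCover S m) : amenableCoverNumber S ≤ c := by
  induction c with
  | top => exact le_top
  | coe m => exact amenableCoverNumber_le_iff.2 (h m le_rfl)

lemma amenableCoverNumber_mono {S T : Set E} (hST : S ⊆ T) :
    amenableCoverNumber S ≤ amenableCoverNumber T :=
  amenableCoverNumber_le_of_forall fun _ hm => (amenableCoverNumber_le_iff.1 hm).mono hST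

lemma amenableCoverNumber_union_le (S T : Set E) :
    amenableCoverNumber (S ∪ T) ≤ amenableCoverNumber S + amenableCoverNumber T := by
  by_cases! htop : amenableCoverNumber S = ⊤ ∨ amenableCoverNumber T = ⊤
  · rw [ENat.add_eq_top.2 htop]
    exact le_top
  obtain ⟨m, hm⟩ := ENat.ne_top_iff_exists.1 htop.1
  obtain ⟨k, hk⟩ := ENat.ne_top_iff_exists.1 htop.2
  rw [← hm, ← hk, ← Nat.cast_add, amenableCoverNumber_le_iff]
  exact (amenableCoverNumber_le_iff.1 hm.ge).union (amenableCoverNumber_le_iff.1 hk.ge)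

lemma amCat_le_iff {k : ℕ} : amCat E ≤ k ↔ HasAmenableCover (Set.univ : Set E) (k + 1) := by
  simp only [HasAmenableCover, Set.univ_subset_iff, Set.iUnion_eq_univ_iff]
  refine ⟨fun h => ?_, fun h => sInf_le ⟨k, rfl, h⟩⟩
  have hlt : amCat E < (k + 1 : ℕ) := h.trans_lt (Nat.cast_lt.2 k.lt_succ_self)
  obtain ⟨_, ⟨j, rfl, U, hUo, hU, hUa⟩, hjk⟩ := sInf_lt_iff.1 hlt
  have hcover : HasAmenableCover (Set.univ : Set E) (j + 1) :=
    ⟨U, hUo, fun y _ => Set.mem_iUnion.2 (hU y), hUa⟩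
  simpa only [HasAmenableCover, Set.univ_subset_iff, Set.iUnion_eq_univ_iff] using
    hcover.mono_right (Nat.succ_le_of_lt (Nat.cast_lt.1 hjk))

lemma not_hasAmenableCover_zero [Nonempty E] : ¬ HasAmenableCover (Set.univ : Set E) 0 := by
  rintro ⟨U, -, hU, -⟩
  obtain ⟨i, -⟩ := Set.mem_iUnion.1 (hU (Set.mem_univ (Classical.arbitrary E)))
  exact i.elim0

lemma amenableCoverNumber_univ_le : amenableCoverNumber (Set.univ : Set E) ≤ amCat E + 1 := by
  refine amenableCoverNumber_le_of_forall fun m hm => ?_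
  cases m with
  | zero => simp at hm
  | succ k => exact amCat_le_iff.1 ((ENat.add_le_add_iff_right ENat.one_ne_top).1 hm)

lemma amCat_add_one_le [Nonempty E] : amCat E + 1 ≤ amenableCoverNumber (Set.univ : Set E) := by
  refine le_iInf₂ fun m hm => ?_
  cases m with
  | zero => exact absurd hm not_hasAmenableCover_zero
  | succ k => exact add_le_add_left (amCat_le_iff.2 hm) 1

end CoverNumber

section DisjointPieces

lemma isOpen_image_inter_of_isOpen_image {A E : Type*} [TopologicalSpace A] [TopologicalSpace E]
    {φ : A → E} (hφ : IsInducing φ) {U O : Set A} (hU : IsOpen U) (hO : IsOpen (φ '' O)) :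
    IsOpen (φ '' (U ∩ O)) := by
  obtain ⟨U', hU', rfl⟩ := hφ.isOpen_iff.1 hU
  rw [Set.image_preimage_inter]
  exact hU'.inter hO

/-- Cover sets in different pieces may share an index, because a loop stays in a single piece. -/
lemma amenableCoverNumber_iUnion_image_le {ι E : Type} {A : ι → Type} [TopologicalSpace E]
    [∀ i, TopologicalSpace (A i)] {φ : ∀ i, C(A i, E)} (hφ : ∀ i, IsEmbedding (φ i))
    {O : ∀ i, Set (A i)} (hO : ∀ i, IsOpen (φ i '' O i))
    (hdisj : Pairwise (Function.onFun Disjoint fun i => φ i '' O i)) :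
    amenableCoverNumber (⋃ i, φ i '' O i) ≤ ⨆ i, amenableCoverNumber (O i) := by
  refine amenableCoverNumber_le_of_forall fun m hm => ?_
  choose U hUo hOU hU using fun i => amenableCoverNumber_le_iff.1 ((iSup_le_iff.1 hm) i)
  have hopen : ∀ j i, IsOpen (φ i '' (U i j ∩ O i)) := fun j i =>
    isOpen_image_inter_of_isOpen_image (hφ i).isInducing (hUo i j) (hO i)
  refine ⟨fun j => ⋃ i, φ i '' (U i j ∩ O i), fun j => isOpen_iUnion (hopen j), ?_, fun j => ?_⟩
  · refine Set.iUnion_subset fun i => ?_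
    rintro _ ⟨a, ha, rfl⟩
    obtain ⟨j, hj⟩ := Set.mem_iUnion.1 (hOU i ha)
    exact Set.mem_iUnion₂.2 ⟨j, i, a, ⟨hj, ha⟩, rfl⟩
  · refine AmenableCoverCondition.iUnion
      (fun i => ((hU i j).mono Set.inter_subset_left).image (hφ i)) (hopen j) ?_
    exact hdisj.mono fun i i' h => h.mono (Set.image_mono Set.inter_subset_right)
      (Set.image_mono Set.inter_subset_right)

lemma isOpen_preimage_connectedComponentIn {X : Type*} [TopologicalSpace X] (F : Set X)
    [LocallyConnectedSpace F] {x : X} (hx : x ∈ F) :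
    IsOpen (Subtype.val ⁻¹' connectedComponentIn F x : Set F) := by
  rw [connectedComponentIn_eq_image hx, Set.preimage_image_eq _ Subtype.val_injective]
  exact isOpen_connectedComponent

lemma disjoint_connectedComponentIn {X : Type*} [TopologicalSpace X] {F : Set X} {x y : X}
    (h : connectedComponentIn F x ≠ connectedComponentIn F y) :
    Disjoint (connectedComponentIn F x) (connectedComponentIn F y) :=
  Set.disjoint_left.2 fun _ hx hy =>
    h ((connectedComponentIn_eq hx).trans (connectedComponentIn_eq hy).symm)

lemma amenableCoverNumber_univ_le_iSup_connectedComponentIn {X : Type} [TopologicalSpace X]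
    (F : Set X) [LocallyConnectedSpace F] :
    amenableCoverNumber (Set.univ : Set F) ≤
      ⨆ S : {S : Set X // ∃ x ∈ F, S = connectedComponentIn F x},
        amenableCoverNumber (Set.univ : Set S.1) := by
  have hSF : ∀ S : {S : Set X // ∃ x ∈ F, S = connectedComponentIn F x}, S.1 ⊆ F := by
    rintro ⟨_, x, -, rfl⟩
    exact connectedComponentIn_subset F x
  have himage : ∀ S, ContinuousMap.inclusion (hSF S) '' Set.univ = Subtype.val ⁻¹' S.1 := fun S =>
    Set.image_univ.trans (Set.range_inclusion (hSF S))
  have hcover : Set.univ ⊆ ⋃ S, ContinuousMap.inclusion (hSF S) '' Set.univ := fun x _ =>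
    Set.mem_iUnion.2 ⟨⟨_, x, x.2, rfl⟩, ⟨x, mem_connectedComponentIn x.2⟩, trivial, rfl⟩
  refine (amenableCoverNumber_mono hcover).trans
    (amenableCoverNumber_iUnion_image_le (fun S => IsEmbedding.inclusion (hSF S)) ?_ ?_)
  · rintro ⟨_, x, hx, rfl⟩
    exact (himage _).symm ▸ isOpen_preimage_connectedComponentIn F hx
  · rintro ⟨_, x, _, rfl⟩ ⟨_, y, _, rfl⟩ hne
    simp only [Function.onFun, himage]
    exact (disjoint_connectedComponentIn fun h => hne (Subtype.ext h)).preimage _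

end DisjointPieces

section PathInduction

lemma pathQuotient_map_trans {X Y : Type*} [TopologicalSpace X] [TopologicalSpace Y] {x y z : X}
    (c : Path.Homotopic.Quotient x y) (d : Path.Homotopic.Quotient y z) (f : C(X, Y)) :
    (c.trans d).map f = (c.map f).trans (d.map f) := by
  induction c using Path.Homotopic.Quotient.ind with | _ p
  induction d using Path.Homotopic.Quotient.ind with | _ q
  exact congrArg Path.Homotopic.Quotient.mk (p.map_trans q f.continuous)

lemma pathQuotient_conj_trans_conj {X : Type*} [TopologicalSpace X] {x y z x' y' z' : X}
    (α : Path.Homotopic.Quotient x x') (β : Path.Homotopic.Quotient y y')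
    (γ : Path.Homotopic.Quotient z z') (c : Path.Homotopic.Quotient x' y')
    (d : Path.Homotopic.Quotient y' z') :
    (α.trans (c.trans β.symm)).trans (β.trans (d.trans γ.symm)) =
      α.trans ((c.trans d).trans γ.symm) := by
  simp only [Path.Homotopic.Quotient.trans_assoc]
  rw [← Path.Homotopic.Quotient.trans_assoc β.symm, Path.Homotopic.Quotient.symm_trans,
    Path.Homotopic.Quotient.refl_trans]

lemma pathQuotient_induction {X : Type*} [TopologicalSpace X]
    {P : ∀ x y : X, Path.Homotopic.Quotient x y → Prop}
    (locally : ∀ z : X, ∃ N ∈ 𝓝 z, ∀ ⦃x y : X⦄ (p : Path x y), Set.range p ⊆ N → P x y (.mk p))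
    (trans : ∀ ⦃x y z : X⦄ (c : Path.Homotopic.Quotient x y) (d : Path.Homotopic.Quotient y z),
      P x y c → P y z d → P x z (c.trans d))
    {x y : X} (c : Path.Homotopic.Quotient x y) : P x y c := by
  induction c using Path.Homotopic.Quotient.ind with | _ p
  choose N hN hNP using locally
  obtain ⟨t, ht₀, hmono, ⟨m, hm⟩, ht⟩ := exists_monotone_Icc_subset_open_cover_unitInterval
    (c := fun z => p ⁻¹' interior (N z)) (fun z => isOpen_interior.preimage p.continuous)
    (fun s _ => Set.mem_iUnion.2 ⟨p s, mem_interior_iff_mem_nhds.2 (hN (p s))⟩)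
  have hshort : ∀ n, P _ _ (.mk (p.subpath (t n) (t (n + 1)))) := fun n => by
    obtain ⟨z, hz⟩ := ht n
    refine hNP z _ ?_
    rw [Path.range_subpath_of_le _ _ _ (hmono n.le_succ)]
    exact Set.image_subset_iff.2 (hz.trans (Set.preimage_mono interior_subset))
  have hinit : ∀ n, P _ _ (.mk (p.subpath 0 (t n))) := fun n => by
    induction n with
    | zero =>
      refine hNP (p 0) _ ?_
      rw [ht₀, Path.range_subpath_of_le _ _ _ le_rfl, Set.Icc_self, Set.image_singleton]
      exact Set.singleton_subset_iff.2 (mem_of_mem_nhds (hN (p 0)))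
    | succ n ih =>
      rw [← Path.Homotopic.Quotient.eq.2 ⟨Path.Homotopy.subpathTransSubpath p 0 (t n) (t (n + 1))⟩]
      exact trans _ _ ih (hshort n)
  have hcast : ∀ ⦃x' y' : X⦄ (hx : x' = x) (hy : y' = y),
      P x' y' (.mk (p.cast hx hy)) → P x y (.mk p) := by
    rintro _ _ rfl rfl h
    exact h
  refine hcast p.source p.target ?_
  rw [← Path.subpath_zero_one, ← hm m le_rfl]
  exact hinit m

/-- Loops in `U` factor through `φ` as soon as short paths in `U` are homotopic to images of paths,
the end points `y` being displaced along prescribed paths `γ y`. -/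
lemma loopsFactorThrough_univ_of_locally {B E : Type} [TopologicalSpace B] [TopologicalSpace E]
    {φ : C(B, E)} {U : Set E} (r : U → B) (γ : ∀ y : U, Path (y : E) (φ (r y)))
    (hloc : ∀ z : U, ∃ N ∈ 𝓝 z, ∀ ⦃x y : U⦄ (p : Path x y), Set.range p ⊆ N →
      ∃ q : Path (r x) (r y), (p.map continuous_subtype_val).Homotopic
        ((γ x).trans ((q.map φ.continuous).trans (γ y).symm))) :
    LoopsFactorThrough φ Set.univ U := by
  have hpath : ∀ {x y : U} (c : Path.Homotopic.Quotient x y),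
      ∃ q : Path.Homotopic.Quotient (r x) (r y), c.map (subInc U) =
        (Path.Homotopic.Quotient.mk (γ x)).trans
          ((q.map φ).trans (Path.Homotopic.Quotient.mk (γ y)).symm) := by
    intro x y c
    induction c using pathQuotient_induction with
    | locally z =>
      obtain ⟨N, hN, h⟩ := hloc z
      refine ⟨N, hN, fun x y p hp => ?_⟩
      obtain ⟨q, hq⟩ := h p hp
      exact ⟨.mk q, Path.Homotopic.Quotient.eq.2 hq⟩
    | trans c d hc hd =>
      obtain ⟨q, hq⟩ := hc
      obtain ⟨q', hq'⟩ := hd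
      refine ⟨q.trans q', ?_⟩
      rw [pathQuotient_map_trans, pathQuotient_map_trans, hq, hq']
      exact pathQuotient_conj_trans_conj _ _ _ _ _
  intro y hy
  refine ⟨r ⟨y, hy⟩, trivial, γ ⟨y, hy⟩, fun p hp => ?_⟩
  obtain ⟨p, -, rfl⟩ := exists_path_map_eq (φ := subInc U) (a := ⟨y, hy⟩) (b := ⟨y, hy⟩)
    .subtypeVal (V := Set.univ) p (fun t => ⟨⟨p t, hp t⟩, trivial, rfl⟩)
  obtain ⟨q, hq⟩ := hpath (.mk p)
  induction q using Path.Homotopic.Quotient.ind with | _ q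
  exact ⟨q, fun _ => trivial, Path.Homotopic.Quotient.eq.1 hq⟩

end PathInduction

section Thickening

/-- Any two paths in `O` with the same end points are homotopic in the ambient space. -/
def HasHomotopicPaths {E : Type*} [TopologicalSpace E] (O : Set E) : Prop :=
  ∀ ⦃a b : E⦄ (p q : Path a b), (∀ t, p t ∈ O) → (∀ t, q t ∈ O) → p.Homotopic q

/-- Every point has a neighbourhood in which paths are determined by their end points up to
homotopy in the ambient space. -/
class SemilocallySimplyConnectedSpace (E : Type*) [TopologicalSpace E] : Prop where
  exists_mem_nhds_hasHomotopicPaths : ∀ x : E, ∃ O ∈ 𝓝 x, HasHomotopicPaths O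

lemma exists_isOpen_forall_joinedIn_ball {E : Type*} [PseudoMetricSpace E]
    [LocallyPathConnectedSpace E] (K : Set E) {δ : ℝ} (hδ : 0 < δ) :
    ∃ U, IsOpen U ∧ K ⊆ U ∧ ∀ y ∈ U, ∃ k ∈ K, JoinedIn (Metric.ball k δ) y k := by
  refine ⟨⋃ k ∈ K, pathComponentIn (Metric.ball k δ) k,
    isOpen_biUnion fun k _ => Metric.isOpen_ball.pathComponentIn k, fun k hk =>
      Set.mem_biUnion hk (mem_pathComponentIn_self (Metric.mem_ball_self hδ)), fun y hy => ?_⟩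
  obtain ⟨k, hk, hky⟩ := Set.mem_iUnion₂.1 hy
  exact ⟨k, hk, JoinedIn.symm hky⟩

variable {B E : Type} [TopologicalSpace B] [LocallyPathConnectedSpace B]

lemma exists_pos_forall_ball_subset_hasHomotopicPaths [PseudoMetricSpace E]
    [SemilocallySimplyConnectedSpace E] {φ : C(B, E)} (hφ : IsInducing φ) {K : Set B}
    (hK : IsCompact K) :
    ∃ δ > 0, ∀ k ∈ K, ∃ O, HasHomotopicPaths O ∧ Metric.ball (φ k) δ ⊆ O ∧
      ∀ b b', φ b ∈ Metric.ball (φ k) δ → φ b' ∈ Metric.ball (φ k) δ →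
        ∃ q : Path b b', ∀ t, φ (q t) ∈ O := by
  have hlocal : ∀ k : B, ∃ Q O : Set E, IsOpen Q ∧ φ k ∈ Q ∧ Q ⊆ O ∧ HasHomotopicPaths O ∧
      ∀ b b', φ b ∈ Q → φ b' ∈ Q → JoinedIn (φ ⁻¹' O) b b' := by
    intro k
    obtain ⟨O, hO, hOpaths⟩ :=
      SemilocallySimplyConnectedSpace.exists_mem_nhds_hasHomotopicPaths (φ k)
    obtain ⟨Q, hQ, hQpre⟩ := hφ.isOpen_iff.1
      ((isOpen_interior.preimage φ.continuous).pathComponentIn (F := φ ⁻¹' interior O) k)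
    have hk : k ∈ φ ⁻¹' Q :=
      hQpre ▸ mem_pathComponentIn_self (mem_interior_iff_mem_nhds.2 hO)
    have hjoined : ∀ b, φ b ∈ Q → JoinedIn (φ ⁻¹' O) k b := fun b hb =>
      JoinedIn.mono (hQpre.subset hb) (Set.preimage_mono interior_subset)
    exact ⟨Q ∩ interior O, O, hQ.inter isOpen_interior,
      ⟨hk, mem_interior_iff_mem_nhds.2 hO⟩, Set.inter_subset_right.trans interior_subset, hOpaths,
      fun b b' hb hb' => (hjoined b hb.1).symm.trans (hjoined b' hb'.1)⟩
  choose Q O hQ hkQ hQO hOpaths hjoined using hlocal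
  obtain ⟨δ, hδ, hball⟩ := lebesgue_number_lemma_of_metric (hK.image φ.continuous) hQ (by
    rintro _ ⟨k, -, rfl⟩
    exact Set.mem_iUnion.2 ⟨k, hkQ k⟩)
  refine ⟨δ, hδ, fun k hk => ?_⟩
  obtain ⟨k', hk'⟩ := hball (φ k) (Set.mem_image_of_mem φ hk)
  refine ⟨O k', hOpaths k', hk'.trans (hQO k'), fun b b' hb hb' => ?_⟩
  have hbb' := hjoined k' b b' (hk' hb) (hk' hb')
  exact ⟨hbb'.somePath, hbb'.somePath_mem⟩

lemma exists_isOpen_loopsFactorThrough_univ [TopologicalSpace E]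
    [TopologicalSpace.PseudoMetrizableSpace E] [LocallyPathConnectedSpace E]
    [SemilocallySimplyConnectedSpace E] {φ : C(B, E)} (hφ : IsInducing φ) {K : Set B}
    (hK : IsCompact K) :
    ∃ U, IsOpen U ∧ φ '' K ⊆ U ∧ LoopsFactorThrough φ Set.univ U := by
  let _ := TopologicalSpace.pseudoMetrizableSpacePseudoMetric E
  obtain ⟨δ, hδ, hball⟩ := exists_pos_forall_ball_subset_hasHomotopicPaths hφ hK
  obtain ⟨ρ, rfl⟩ : ∃ ρ, δ = 4 * ρ := ⟨δ / 4, by ring⟩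
  have hρ : 0 < ρ := by linarith
  obtain ⟨U, hU, hKU, hjoined⟩ := exists_isOpen_forall_joinedIn_ball (φ '' K) hρ
  have hretract : ∀ y : U, ∃ k ∈ K, JoinedIn (Metric.ball (φ k) ρ) (y : E) (φ k) := fun y =>
    Set.exists_mem_image.1 (hjoined y y.2)
  choose r hrK hr using hretract
  refine ⟨U, hU, hKU, loopsFactorThrough_univ_of_locally r (fun y => (hr y).somePath) fun z =>
    ⟨Metric.ball z ρ, Metric.ball_mem_nhds z hρ, fun x y p hp => ?_⟩⟩
  obtain ⟨O, hO, hballO, hlift⟩ := hball (r z) (hrK z)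
  have hnear : ∀ w ∈ Metric.ball z ρ, dist (w : E) (φ (r z)) < 2 * ρ := fun w hw => by
    linarith [dist_triangle (w : E) z (φ (r z)), Metric.mem_ball.1 (hr z).source_mem,
      Metric.mem_ball.1 hw, Subtype.dist_eq w z]
  have hretract_near : ∀ w ∈ Metric.ball z ρ, dist (φ (r w)) (φ (r z)) < 3 * ρ := fun w hw => by
    linarith [dist_triangle_left (φ (r w)) (φ (r z)) w, Metric.mem_ball.1 (hr w).source_mem,
      hnear w hw]
  have hpath_mem : ∀ w ∈ Metric.ball z ρ, ∀ t, (hr w).somePath t ∈ O := fun w hw t =>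
    hballO (Metric.ball_subset_ball' (by linarith [hretract_near w hw]) ((hr w).somePath_mem t))
  have hlift_mem : ∀ w ∈ Metric.ball z ρ, φ (r w) ∈ Metric.ball (φ (r z)) (4 * ρ) := fun w hw =>
    Metric.mem_ball.2 (by linarith [hretract_near w hw])
  have hx : x ∈ Metric.ball z ρ := hp p.source_mem_range
  have hy : y ∈ Metric.ball z ρ := hp p.target_mem_range
  obtain ⟨q, hq⟩ := hlift (r x) (r y) (hlift_mem x hx) (hlift_mem y hy)
  refine ⟨q, hO _ _ (fun t => hballO ?_) ?_⟩
  · exact Metric.mem_ball.2 ((hnear (p t) (hp ⟨t, rfl⟩)).trans (by linarith))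
  · rw [← Set.range_subset_iff, Path.trans_range, Path.trans_range, Path.symm_range]
    simp only [Set.union_subset_iff, Set.range_subset_iff]
    exact ⟨hpath_mem x hx, hq, hpath_mem y hy⟩

lemma AmenableCoverCondition.exists_isOpen_image_subset [TopologicalSpace E]
    [TopologicalSpace.PseudoMetrizableSpace E] [LocallyPathConnectedSpace E]
    [SemilocallySimplyConnectedSpace E] {V : Set B} (hV : AmenableCoverCondition V)
    (hVo : IsOpen V) {φ : C(B, E)} (hφ : IsInducing φ) {K : Set B} (hK : IsCompact K)
    (hKV : K ⊆ V) : ∃ U, IsOpen U ∧ φ '' K ⊆ U ∧ AmenableCoverCondition U := by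
  have : LocallyPathConnectedSpace V := hVo.locallyPathConnectedSpace
  have hK' : (subInc V) '' (Subtype.val ⁻¹' K) = K :=
    (Subtype.image_preimage_coe V K).trans (Set.inter_eq_right.2 hKV)
  obtain ⟨U, hU, hKU, hfactor⟩ := exists_isOpen_loopsFactorThrough_univ
    (φ := φ.comp (subInc V)) (hφ.comp .subtypeVal)
    (IsInducing.subtypeVal.isCompact_iff.2 (hK'.symm ▸ hK))
  refine ⟨U, hU, ?_, hV.of_loopsFactorThrough (hfactor.of_comp fun v _ => v.2)⟩
  rwa [ContinuousMap.coe_comp, Set.image_comp, hK'] at hKU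

lemma amenableCoverNumber_image_le [TopologicalSpace E]
    [TopologicalSpace.PseudoMetrizableSpace E] [LocallyPathConnectedSpace E]
    [SemilocallySimplyConnectedSpace E] {φ : C(B, E)} (hφ : IsInducing φ) {S : Set B}
    (hS : IsCompact S) : amenableCoverNumber (φ '' S) ≤ amenableCoverNumber S := by
  refine amenableCoverNumber_le_of_forall fun m hm => ?_
  obtain ⟨V, hVo, hSV, hV⟩ := amenableCoverNumber_le_iff.1 hm
  have : TopologicalSpace.PseudoMetrizableSpace B := hφ.pseudoMetrizableSpace
  obtain ⟨K, hK, hKV, hSK⟩ :=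
    hS.finite_compact_cover Finset.univ V (fun i _ => hVo i) (by simpa using hSV)
  choose U hUo hKU hU using fun i =>
    (hV i).exists_isOpen_image_subset (hVo i) hφ (hK i) (hKV i)
  refine ⟨U, hUo, ?_, hU⟩
  simp only [hSK, Finset.mem_univ, Set.iUnion_true, Set.image_iUnion]
  exact Set.iUnion_mono hKU

end Thickening

section ConvexCharts

/-- `X` is covered by open subsets homeomorphic to convex subsets of `E`. This holds both for a
manifold with boundary and for its boundary, and suffices for the local properties of either. -/
def HasConvexCharts (E X : Type*) [AddCommGroup E] [Module ℝ E] [TopologicalSpace E]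
    [TopologicalSpace X] : Prop :=
  ∀ x : X, ∃ (U : Set X) (g : U → E), IsOpen U ∧ x ∈ U ∧ IsEmbedding g ∧ Convex ℝ (Set.range g)

lemma locallyPathConnectedSpace_of_forall_isOpen {X : Type*} [TopologicalSpace X]
    (h : ∀ x : X, ∃ U : Set X, IsOpen U ∧ x ∈ U ∧ LocallyPathConnectedSpace U) :
    LocallyPathConnectedSpace X := by
  rw [locallyPathConnectedSpace_iff_pathComponentIn_mem_nhds]
  intro x O hO hx
  obtain ⟨U, hU, hxU, hlpc⟩ := h x
  have hxO : (⟨x, hxU⟩ : U) ∈ Subtype.val ⁻¹' O := hx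
  refine Filter.mem_of_superset ((hU.isOpenMap_subtype_val _
    ((hO.preimage continuous_subtype_val).pathComponentIn ⟨x, hxU⟩)).mem_nhds
      ⟨_, mem_pathComponentIn_self hxO, rfl⟩) ?_
  exact ((isPathConnected_pathComponentIn hxO).image continuous_subtype_val).subset_pathComponentIn
    ⟨_, mem_pathComponentIn_self hxO, rfl⟩
    (Set.image_subset_iff.2 pathComponentIn_subset)

lemma hasHomotopicPaths_of_simplyConnectedSpace {X : Type} [TopologicalSpace X] (U : Set X)
    [SimplyConnectedSpace U] : HasHomotopicPaths U := by
  intro a b p q hp hq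
  obtain ⟨ha, hb⟩ : a ∈ U ∧ b ∈ U := ⟨p.source ▸ hp 0, p.target ▸ hp 1⟩
  have hlift : ∀ r : Path a b, (∀ t, r t ∈ U) → ∃ r' : Path (⟨a, ha⟩ : U) ⟨b, hb⟩,
      r'.map continuous_subtype_val = r := fun r hr =>
    (exists_path_map_eq (φ := subInc U) (a := ⟨a, ha⟩) (b := ⟨b, hb⟩) .subtypeVal
      (V := Set.univ) r fun t => ⟨⟨r t, hr t⟩, trivial, rfl⟩).imp fun _ h => h.2
  obtain ⟨p, rfl⟩ := hlift p hp
  obtain ⟨q, rfl⟩ := hlift q hq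
  exact (SimplyConnectedSpace.paths_homotopic p q).map (subInc U)

namespace HasConvexCharts

variable {E : Type*} [AddCommGroup E] [Module ℝ E] [TopologicalSpace E]

protected lemma locallyPathConnectedSpace [IsTopologicalAddGroup E] [ContinuousSMul ℝ E]
    [LocallyConvexSpace ℝ E] {X : Type*} [TopologicalSpace X] (hX : HasConvexCharts E X) :
    LocallyPathConnectedSpace X :=
  locallyPathConnectedSpace_of_forall_isOpen fun x => by
    obtain ⟨U, g, hU, hxU, hg, hconv⟩ := hX x
    have := hconv.locallyPathConnectedSpace
    exact ⟨U, hU, hxU, hg.toHomeomorph.isOpenEmbedding.locallyPathConnectedSpace⟩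

protected lemma semilocallySimplyConnectedSpace [IsTopologicalAddGroup E] [ContinuousSMul ℝ E]
    {X : Type} [TopologicalSpace X] (hX : HasConvexCharts E X) :
    SemilocallySimplyConnectedSpace X where
  exists_mem_nhds_hasHomotopicPaths x := by
    obtain ⟨U, g, hU, hxU, hg, hconv⟩ := hX x
    have := hconv.contractibleSpace ⟨_, Set.mem_range_self ⟨x, hxU⟩⟩
    have : ContractibleSpace U := hg.toHomeomorph.contractibleSpace
    exact ⟨U, hU.mem_nhds hxU, hasHomotopicPaths_of_simplyConnectedSpace U⟩

protected lemma secondCountableTopology [SecondCountableTopology E] {X : Type*}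
    [TopologicalSpace X] [SigmaCompactSpace X] (hX : HasConvexCharts E X) :
    SecondCountableTopology X := by
  choose U g hU hxU hg _ using hX
  obtain ⟨s, hs, hcover⟩ := countable_cover_nhds_of_sigmaCompact fun x => (hU x).mem_nhds (hxU x)
  have : Countable s := hs
  have : ∀ x : s, SecondCountableTopology (U x) := fun x => (hg x).secondCountableTopology
  exact TopologicalSpace.secondCountableTopology_of_countable_cover (fun x : s => hU x)
    (by rw [← hcover, Set.biUnion_eq_iUnion])

end HasConvexCharts

lemma convex_halfSpace (n : ℕ) : Convex ℝ (HalfSpace n) := by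
  rw [HalfSpace, Set.ofPred_forall]
  exact convex_iInter fun h => convex_halfSpace_ge (LinearMap.proj (R := ℝ) _).isLinear 0

lemma convex_halfSpaceBoundary (n : ℕ) : Convex ℝ (HalfSpaceBoundary n) := by
  rintro x ⟨h, hx⟩ y ⟨_, hy⟩ a b _ _ _
  exact ⟨h, by simp [hx, hy]⟩

lemma isClosed_halfSpaceBoundary (n : ℕ) : IsClosed (HalfSpaceBoundary n) := by
  rw [HalfSpaceBoundary, Set.ofPred_exists]
  exact isClosed_iUnion_of_finite fun h => isClosed_eq (continuous_apply _) continuous_const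

end ConvexCharts

namespace OCCManifold

variable {n : ℕ} (M : OCCManifold n)

lemma exists_convex_chart (x : M.carrier) :
    ∃ (U : Set M.carrier) (g : U → Fin n → ℝ), IsOpen U ∧ x ∈ U ∧ IsEmbedding g ∧
      Convex ℝ (Set.range g) ∧
      ∀ y : U, (y : M.carrier) ∈ M.boundary ↔ g y ∈ HalfSpaceBoundary n := by
  obtain ⟨U, V, φ, hxU, hU, hV, hφ⟩ := M.charts x
  obtain ⟨V₀, hV₀, rfl⟩ := isOpen_induced_iff.1 hV
  let g : U → Fin n → ℝ := fun y => (φ y : HalfSpace n)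
  have hg : IsEmbedding g := .comp .subtypeVal (.comp .subtypeVal φ.isEmbedding)
  have hrange : Set.range g = V₀ ∩ HalfSpace n := by
    ext v
    refine ⟨?_, fun hv => ⟨φ.symm ⟨⟨v, hv.2⟩, hv.1⟩, by simp [g]⟩⟩
    rintro ⟨y, rfl⟩
    exact ⟨(φ y).2, (φ y : HalfSpace n).2⟩
  obtain ⟨r, hr, hball⟩ := Metric.isOpen_iff.1 hV₀ (g ⟨x, hxU⟩) (φ ⟨x, hxU⟩).2
  let U' : Set M.carrier := Subtype.val '' (g ⁻¹' Metric.ball (g ⟨x, hxU⟩) r)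
  have hU'U : U' ⊆ U := Subtype.coe_image_subset U _
  refine ⟨U', g ∘ Set.inclusion hU'U,
    hU.isOpenMap_subtype_val _ (Metric.isOpen_ball.preimage hg.continuous),
    ⟨⟨x, hxU⟩, Metric.mem_ball_self hr, rfl⟩, hg.comp (.inclusion hU'U), ?_,
    fun y => hφ (Set.inclusion hU'U y)⟩
  have hrange' : Set.range (g ∘ Set.inclusion hU'U) =
      Metric.ball (g ⟨x, hxU⟩) r ∩ HalfSpace n := by
    have hpre : {y : U | (y : M.carrier) ∈ U'} = g ⁻¹' Metric.ball (g ⟨x, hxU⟩) r :=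
      Set.preimage_image_eq _ Subtype.val_injective
    rw [Set.range_comp, Set.range_inclusion, hpre, Set.image_preimage_eq_inter_range, hrange,
      ← Set.inter_assoc, Set.inter_eq_left.2 hball]
  rw [hrange']
  exact (convex_ball _ _).inter (convex_halfSpace n)

lemma hasConvexCharts : HasConvexCharts (Fin n → ℝ) M.carrier := fun x => by
  obtain ⟨U, g, hU, hxU, hg, hconv, -⟩ := M.exists_convex_chart x
  exact ⟨U, g, hU, hxU, hg, hconv⟩

lemma hasConvexCharts_boundary : HasConvexCharts (Fin n → ℝ) M.boundary := fun x => by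
  obtain ⟨U, g, hU, hxU, hg, hconv, hbd⟩ := M.exists_convex_chart x
  let i : (Subtype.val ⁻¹' U : Set M.boundary) → U := U.restrictPreimage Subtype.val
  have hrange : Set.range (g ∘ i) = Set.range g ∩ HalfSpaceBoundary n := by
    ext v
    constructor
    · rintro ⟨y, rfl⟩
      exact ⟨⟨_, rfl⟩, (hbd (i y)).1 y.1.2⟩
    · rintro ⟨⟨y, rfl⟩, hy⟩
      exact ⟨⟨⟨y, (hbd y).2 hy⟩, y.2⟩, rfl⟩
  refine ⟨Subtype.val ⁻¹' U, g ∘ i, hU.preimage continuous_subtype_val, hxU,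
    hg.comp (IsEmbedding.subtypeVal.restrictPreimage U), ?_⟩
  rw [hrange]
  exact hconv.inter (convex_halfSpaceBoundary n)

lemma isClosed_boundary : IsClosed M.boundary := by
  rw [← isOpen_compl_iff, isOpen_iff_mem_nhds]
  intro x hx
  obtain ⟨U, g, hU, hxU, hg, -, hbd⟩ := M.exists_convex_chart x
  have hopen : IsOpen (Subtype.val '' (g ⁻¹' (HalfSpaceBoundary n)ᶜ)) :=
    hU.isOpenMap_subtype_val _
      ((isClosed_halfSpaceBoundary n).isOpen_compl.preimage hg.continuous)
  refine Filter.mem_of_superset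
    (hopen.mem_nhds ⟨⟨x, hxU⟩, fun h => hx ((hbd _).2 h), rfl⟩) ?_
  rintro _ ⟨y, hy, rfl⟩ h
  exact hy ((hbd y).1 h)

instance : T2Space M.carrier := M.t2

instance : CompactSpace M.carrier := M.compact

instance : ConnectedSpace M.carrier := M.connected

instance : CompactSpace M.boundary := isCompact_iff_compactSpace.1 M.isClosed_boundary.isCompact

instance : SecondCountableTopology M.carrier := M.hasConvexCharts.secondCountableTopology

instance : LocallyPathConnectedSpace M.carrier := M.hasConvexCharts.locallyPathConnectedSpace

instance : LocallyPathConnectedSpace M.boundary :=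
  M.hasConvexCharts_boundary.locallyPathConnectedSpace

instance : SemilocallySimplyConnectedSpace M.carrier :=
  M.hasConvexCharts.semilocallySimplyConnectedSpace

end OCCManifold

namespace TwistedDouble

variable {n : ℕ} {M : OCCManifold n} {f : M.boundary ≃ₜ M.boundary}

open scoped Classical in
/-- The representative of a point of `M ⊔ M` modulo the gluing along `f`: boundary points of the
second copy are replaced by the points of the first copy to which they are glued. -/
def normalForm (f : M.boundary ≃ₜ M.boundary) : M.carrier ⊕ M.carrier → M.carrier ⊕ M.carrier
  | Sum.inl a => Sum.inl a
  | Sum.inr b => if h : b ∈ M.boundary then Sum.inl (f.symm ⟨b, h⟩ : M.carrier) else Sum.inr b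

variable (D : TwistedDouble M f)

lemma normalForm_eq_of_elim_eq {a b : M.carrier ⊕ M.carrier}
    (h : Sum.elim D.embp D.embm a = Sum.elim D.embp D.embm b) :
    normalForm f a = normalForm f b := by
  refine (eq_equivalence.comap (normalForm f)).eqvGen_iff.1
    (((D.identifications a b).1 h).mono ?_)
  rintro _ _ ⟨z, rfl, rfl⟩
  change normalForm f (.inl z) = normalForm f (.inr (f z))
  simp [normalForm]

lemma embp_injective : Function.Injective D.embp := fun a b h =>
  Sum.inl_injective (D.normalForm_eq_of_elim_eq (a := Sum.inl a) (b := Sum.inl b) h)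

lemma embm_injective : Function.Injective D.embm := fun a b h => by
  have hab := D.normalForm_eq_of_elim_eq (a := Sum.inr a) (b := Sum.inr b) h
  by_cases ha : a ∈ M.boundary <;> by_cases hb : b ∈ M.boundary <;>
    simp_all [normalForm, SetCoe.ext_iff]

lemma embp_eq_embm_iff {a b : M.carrier} :
    D.embp a = D.embm b ↔ ∃ z : M.boundary, a = z ∧ b = f z := by
  constructor
  · intro h
    have hab := D.normalForm_eq_of_elim_eq (a := Sum.inl a) (b := Sum.inr b) h
    by_cases hb : b ∈ M.boundary
    · exact ⟨f.symm ⟨b, hb⟩, by simpa [normalForm, hb] using hab, by simp⟩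
    · simp [normalForm, hb] at hab
  · rintro ⟨z, rfl, rfl⟩
    exact (D.identifications (Sum.inl z) (Sum.inr (f z))).2 (.rel _ _ ⟨z, rfl, rfl⟩)

lemma image_embp_compl_boundary : D.embp '' M.boundaryᶜ = (Set.range D.embm)ᶜ := by
  ext y
  constructor
  · rintro ⟨a, ha, rfl⟩ ⟨b, hb⟩
    obtain ⟨z, rfl, -⟩ := D.embp_eq_embm_iff.1 hb.symm
    exact ha z.2
  · intro hy
    obtain ⟨a | b, rfl⟩ := D.quotient.surjective y
    · exact ⟨a, fun ha => hy ⟨f ⟨a, ha⟩, (D.embp_eq_embm_iff.2 ⟨⟨a, ha⟩, rfl, rfl⟩).symm⟩, rfl⟩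
    · exact absurd ⟨b, rfl⟩ hy

lemma image_embm_compl_boundary : D.embm '' M.boundaryᶜ = (Set.range D.embp)ᶜ := by
  ext y
  constructor
  · rintro ⟨b, hb, rfl⟩ ⟨a, ha⟩
    obtain ⟨z, -, rfl⟩ := D.embp_eq_embm_iff.1 ha
    exact hb (f z).2
  · intro hy
    obtain ⟨a | b, rfl⟩ := D.quotient.surjective y
    · exact absurd ⟨a, rfl⟩ hy
    · exact ⟨b, fun hb => hy ⟨f.symm ⟨b, hb⟩, D.embp_eq_embm_iff.2 ⟨_, rfl, by simp⟩⟩, rfl⟩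

/-- The two copies of `M` in its twisted double, as a family of maps. -/
def copy : Bool → C(M.carrier, D.double.carrier)
  | true => D.embp
  | false => D.embm

lemma isClosedEmbedding_copy (b : Bool) : IsClosedEmbedding (D.copy b) :=
  (D.copy b).continuous.isClosedEmbedding <|
    match b with
    | true => D.embp_injective
    | false => D.embm_injective

lemma image_copy_compl_boundary (b : Bool) :
    D.copy b '' M.boundaryᶜ = (Set.range (D.copy !b))ᶜ :=
  match b with
  | true => D.image_embp_compl_boundary
  | false => D.image_embm_compl_boundary

lemma isOpen_image_copy_compl_boundary (b : Bool) : IsOpen (D.copy b '' M.boundaryᶜ) := by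
  rw [image_copy_compl_boundary]
  exact (D.isClosedEmbedding_copy !b).isClosed_range.isOpen_compl

lemma pairwise_disjoint_image_copy_compl_boundary :
    Pairwise (Function.onFun Disjoint fun b => D.copy b '' M.boundaryᶜ) := by
  intro b b' hbb'
  obtain rfl : b' = !b := Bool.eq_not.2 hbb'.symm
  rw [Function.onFun, image_copy_compl_boundary D b]
  exact disjoint_compl_left.mono_right (Set.image_subset_range _ _)

lemma iUnion_image_copy_compl_boundary_union_image_embp_boundary :
    (⋃ b, D.copy b '' M.boundaryᶜ) ∪ D.embp '' M.boundary = Set.univ := by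
  rw [Set.eq_univ_iff_forall]
  intro y
  by_cases hy : y ∈ Set.range D.embp
  · obtain ⟨a, rfl⟩ := hy
    by_cases ha : a ∈ M.boundary
    · exact .inr ⟨a, ha, rfl⟩
    · exact .inl (Set.mem_iUnion.2 ⟨true, a, ha, rfl⟩)
  · exact .inl (Set.mem_iUnion.2 ⟨false, D.image_embm_compl_boundary.superset hy⟩)

lemma amenableCoverNumber_iUnion_image_copy_le :
    amenableCoverNumber (⋃ b, D.copy b '' M.boundaryᶜ) ≤ amCat M.carrier + 1 :=
  calc amenableCoverNumber (⋃ b, D.copy b '' M.boundaryᶜ)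
      ≤ ⨆ _ : Bool, amenableCoverNumber M.boundaryᶜ :=
        amenableCoverNumber_iUnion_image_le (fun b => (D.isClosedEmbedding_copy b).isEmbedding)
          D.isOpen_image_copy_compl_boundary D.pairwise_disjoint_image_copy_compl_boundary
    _ = amenableCoverNumber M.boundaryᶜ := ciSup_const
    _ ≤ amenableCoverNumber Set.univ := amenableCoverNumber_mono (Set.subset_univ _)
    _ ≤ amCat M.carrier + 1 := amenableCoverNumber_univ_le

lemma amenableCoverNumber_image_embp_boundary_le :
    amenableCoverNumber (D.embp '' M.boundary) ≤
      ⨆ S : {S : Set M.carrier // IsBoundaryComponent M S}, (amCat S.1 + 1) := by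
  have hembed : IsEmbedding (D.embp.comp (subInc M.boundary)) :=
    (D.isClosedEmbedding_copy true).isEmbedding.comp .subtypeVal
  calc amenableCoverNumber (D.embp '' M.boundary)
      = amenableCoverNumber (D.embp.comp (subInc M.boundary) '' Set.univ) := by
        rw [ContinuousMap.coe_comp, Set.image_comp, Set.image_univ]
        exact congrArg (fun S => amenableCoverNumber (D.embp '' S)) Subtype.range_coe.symm
    _ ≤ amenableCoverNumber (Set.univ : Set M.boundary) :=
        amenableCoverNumber_image_le hembed.isInducing isCompact_univ
    _ ≤ ⨆ S : {S : Set M.carrier // IsBoundaryComponent M S},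
          amenableCoverNumber (Set.univ : Set S.1) :=
        amenableCoverNumber_univ_le_iSup_connectedComponentIn M.boundary
    _ ≤ ⨆ S : {S : Set M.carrier // IsBoundaryComponent M S}, (amCat S.1 + 1) :=
        iSup_mono fun _ => amenableCoverNumber_univ_le

end TwistedDouble

theorem amCat_twisted_double_sum_general (n : ℕ) (M : OCCManifold n)
    (f : M.boundary ≃ₜ M.boundary) (D : TwistedDouble M f) :
    amCat D.double.carrier ≤ amCat M.carrier +
      ⨆ S : {S : Set M.carrier // IsBoundaryComponent M S}, (amCat S.1 + 1) := by
  rw [← ENat.add_le_add_iff_right ENat.one_ne_top, add_right_comm]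
  calc amCat D.double.carrier + 1
      ≤ amenableCoverNumber (Set.univ : Set D.double.carrier) := amCat_add_one_le
    _ ≤ amenableCoverNumber (⋃ b, D.copy b '' M.boundaryᶜ) +
          amenableCoverNumber (D.embp '' M.boundary) := by
        rw [← D.iUnion_image_copy_compl_boundary_union_image_embp_boundary]
        exact amenableCoverNumber_union_le _ _
    _ ≤ (amCat M.carrier + 1) +
          ⨆ S : {S : Set M.carrier // IsBoundaryComponent M S}, (amCat S.1 + 1) :=
        add_le_add D.amenableCoverNumber_iUnion_image_copy_le
          D.amenableCoverNumber_image_embp_boundary_le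

/-- **Amenable category of twisted doubles (sum version).**
Let `M` be an oriented compact connected `n`-manifold with non-empty boundary all of whose
boundary components are `π₁`-injective, and let `f : ∂M → ∂M` be an orientation-preserving
homeomorphism.  Then
`cat_Am(D_f(M)) ≤ cat_Am(M) + max_i (cat_Am(S_i) + 1)`, the maximum running over the boundary
components `S_i` of `M`. -/
theorem amCat_twisted_double_sum (n : ℕ) (M : OCCManifold n) (hbd : M.boundary.Nonempty)
    (h1 : ∀ S : Set M.carrier, IsBoundaryComponent M S → Pi1Injective S)
    (f : M.boundary ≃ₜ M.boundary) (hf : OrientationCompatible 1 M M f)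
    (D : TwistedDouble M f) :
    amCat D.double.carrier ≤ amCat M.carrier +
      ⨆ S : {S : Set M.carrier // IsBoundaryComponent M S}, (amCat S.1 + 1) :=
  amCat_twisted_double_sum_general n M f D

end
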